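/- For d = 11: the couples (Σ_{1,5,5,1}, (1,8)) and (Σ_{1,4,6,1}, (1,8)) are not realizable, and every compatible couple (σ, (pos, neg)) of degree 11 with min(pos, neg) = 1 whose Z_2×Z_2-orbit is not among those of the eight couples (Σ_{1,5,5,1},(1,8)), (Σ_{1,4,6,1},(1,8)), (Σ_{1,4,5,2},(1,8)), (Σ_{1,5,4,2},(1,8)), (Σ_{2,4,4,2},(1,8)), (Σ_{1,4,4,1,1,1},(1,6)), (Σ_{1,4,1,1,4,1},(1,6)), (Σ_{1,3,1,1,1,1,3,1},(1,4)) is realizable. -/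

import Mathlib

/-!
A sign pattern of degree `d` beginning with `+` is encoded by the word of length `d` that lists its
sign changes and sign preservations.

**Realizability.** If `P₁` and `P₂` realize the words `w₁` and `w₂`, then for small `ε > 0` the
product of `P₁(x)` and `ε ^ d₂ * P₂(x / ε)` realizes the concatenation `w₁ ++ w₂`, and the numbers
of positive and of negative roots add up (`WordRealizable.append`). Twenty explicit polynomials,
given by integer roots and quadratic factors (`pieces`), suffice: a finite search
(`tile_or_excluded`) shows that every admissible word of length `11` with one positive root is a
concatenation of the corresponding words with the right root counts, except for the twelve words
which make up the eight excluded orbits. The case of one negative root follows by `x ↦ -x`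
(`WordRealizable.neg`).

**Nonrealizability.** A polynomial with root pair `(1, 8)` is a constant times
`(x - a) * (x ^ 2 - u * x + v) * ∏ (x + b i)` with `a, b i > 0` and `u ^ 2 < 4 * v`. By Newton's
inequalities (`exists_newton`) the elementary symmetric functions of the `b i`, divided by binomial
coefficients, form a log-concave sequence `p`. Up to `x ↦ 1 / x` and scaling, `v = 1` and `a ≤ 1`.
The signs of the coefficients of `x ^ 10` and `x` bound the first ratio `p 1 / p 0` from above and
the last ratio `p 8 / p 7` from below; since the ratios decrease, `a` is very small. The sign of
the coefficient of `x ^ 7` then forces `p 3 / p 2` to exceed the upper bound on `p 1 / p 0`, a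
contradiction (`core_estimate`). Both forbidden patterns have the signs used here.
-/

open Polynomial

/-- Alternating blocks of signs, starting with sign `s`. -/
def altBlocks : List ℕ → ℝ → List ℝ
  | [], _ => []
  | m :: rest, s => List.replicate m s ++ altBlocks rest (-s)

/-- The sign pattern `Σ_{m₁,…,m_s}`. -/
def sigmaPat (blocks : List ℕ) : List ℝ := altBlocks blocks 1

/-- The real polynomial `Q` defines the sign pattern `σ`. -/
def HasSignPattern (Q : Polynomial ℝ) (σ : List ℝ) : Prop :=
  Q.natDegree + 1 = σ.length ∧
  ∀ i : Fin σ.length, σ.get i * Q.coeff (Q.natDegree - (i : ℕ)) > 0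

/-- `Q` has exactly `pos` positive and `neg` negative real roots, all simple. -/
def RootData (Q : Polynomial ℝ) (pos neg : ℕ) : Prop :=
  Q.roots.countP (fun x => 0 < x) = pos ∧
  Q.roots.countP (fun x => x < 0) = neg ∧
  Q.roots.Nodup

/-- The couple `(σ, (pos, neg))` is realizable. -/
def Realizable (σ : List ℝ) (pos neg : ℕ) : Prop :=
  ∃ Q : Polynomial ℝ, HasSignPattern Q σ ∧ RootData Q pos neg

/-- `σ` is a genuine sign pattern: it begins with `+` and all its entries are `±1`. -/
def IsSignPatternList (σ : List ℝ) : Prop :=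
  σ.head? = some 1 ∧ ∀ s ∈ σ, s = 1 ∨ s = -1

/-- Number of sign changes in the string `σ`. -/
noncomputable def signChanges (σ : List ℝ) : ℕ := (σ.zip σ.tail).countP (fun p => p.1 * p.2 < 0)

/-- `(pos, neg)` is admissible for the sign pattern `σ` (Descartes' rule of signs). -/
def Admissible (σ : List ℝ) (pos neg : ℕ) : Prop :=
  pos ≤ signChanges σ ∧ neg ≤ (σ.length - 1) - signChanges σ ∧
  Even (signChanges σ - pos) ∧ Even ((σ.length - 1) - signChanges σ - neg)

/-- A couple: a sign pattern together with the pair `(pos, neg)`. -/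
abbrev Couple := List ℝ × ℕ × ℕ

/-- The involution `i_m` on sign patterns: `σ(Q) ↦ (-1)^d σ(Q(-x))`. -/
def imPat (σ : List ℝ) : List ℝ := σ.mapIdx fun i s => (-1 : ℝ) ^ i * s

/-- The involution `i_r` on sign patterns: `σ(Q) ↦ σ(x^d Q(1/x) / Q(0))`. -/
def irPat (σ : List ℝ) : List ℝ := σ.reverse.map fun s => σ.getLastD 1 * s

/-- `i_m` on couples: it swaps `pos` and `neg`. -/
def imC (C : Couple) : Couple := (imPat C.1, C.2.2, C.2.1)

/-- `i_r` on couples: it preserves `(pos, neg)`. -/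
def irC (C : Couple) : Couple := (irPat C.1, C.2.1, C.2.2)

/-- `D` lies in the `ℤ₂ × ℤ₂`-orbit of `C`. -/
def SameOrbit (C D : Couple) : Prop :=
  D = C ∨ D = imC C ∨ D = irC C ∨ D = imC (irC C)

/-! ### Sign patterns as words -/

/-- The sign of the `i`-th coefficient from the top prescribed by the word `w` of sign changes
(`true`) and sign preservations (`false`), for a positive leading coefficient. -/
def sgnAt (w : List Bool) (i : ℕ) : ℝ :=
  ((w.take i).map fun b => if b then (-1 : ℝ) else 1).prod

/-- The couple with change/preservation word `w` and pair `(pos, neg)` is realizable. -/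
def WordRealizable (w : List Bool) (pos neg : ℕ) : Prop :=
  ∃ Q : ℝ[X], Q.natDegree = w.length ∧
    (∀ i ≤ w.length, 0 < sgnAt w i * Q.coeff (w.length - i)) ∧ RootData Q pos neg

/-- The sign pattern starting with `s` whose changes and preservations are listed by `w`. -/
def wordPat : ℝ → List Bool → List ℝ
  | s, [] => [s]
  | s, b :: w => s :: wordPat (if b then -s else s) w

lemma sgnAt_zero (w : List Bool) : sgnAt w 0 = 1 := by simp [sgnAt]

lemma sgnAt_append_left (w₁ w₂ : List Bool) {i : ℕ} (hi : i ≤ w₁.length) :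
    sgnAt (w₁ ++ w₂) i = sgnAt w₁ i := by
  simp [sgnAt, List.take_append_of_le_length hi]

lemma sgnAt_append_right (w₁ w₂ : List Bool) (j : ℕ) :
    sgnAt (w₁ ++ w₂) (w₁.length + j) = sgnAt w₁ w₁.length * sgnAt w₂ j := by
  simp [sgnAt, List.take_length_add_append]

/-- Concatenation: gluing `P₁(x)` with the rescaled `ε ^ d₂ P₂(x / ε)` for small `ε > 0`
concatenates the words and adds the numbers of positive and negative roots. -/
lemma WordRealizable.append {w₁ w₂ : List Bool} {p₁ n₁ p₂ n₂ : ℕ}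
    (h₁ : WordRealizable w₁ p₁ n₁) (h₂ : WordRealizable w₂ p₂ n₂) :
    WordRealizable (w₁ ++ w₂) (p₁ + p₂) (n₁ + n₂) := by
  obtain ⟨P, hPd, hPs, hPp, hPn, hPnd⟩ := h₁
  obtain ⟨R, hRd, hRs, hRp, hRn, hRnd⟩ := h₂
  have hlead : 0 < R.coeff w₂.length := by simpa [sgnAt_zero] using hRs 0 (Nat.zero_le _)
  have hP0 : P.coeff 0 ≠ 0 := by
    intro h; simpa [h] using hPs w₁.length le_rfl
  have hPne : P ≠ 0 := by rintro rfl; simp at hP0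
  have hRne : R ≠ 0 := by rintro rfl; simp at hlead
  -- The sign conditions hold for all small positive `ε`.
  have hsign : ∀ i ∈ Finset.range ((w₁ ++ w₂).length + 1), ∀ᶠ ε : ℝ in nhdsWithin 0 (Set.Ioi 0),
      0 < sgnAt (w₁ ++ w₂) i * (P * R.scaleRoots ε).coeff ((w₁ ++ w₂).length - i) := by
    intro i hi
    rw [Finset.mem_range, List.length_append] at hi
    rw [List.length_append]
    rcases le_or_gt i w₁.length with hle | hgt
    · rw [sgnAt_append_left _ _ hle]
      have hcont : Continuous fun ε : ℝ =>
          sgnAt w₁ i * (P * R.scaleRoots ε).coeff (w₁.length + w₂.length - i) := by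
        simp only [coeff_mul, coeff_scaleRoots]
        fun_prop
      have hval : 0 < sgnAt w₁ i * (P * R.scaleRoots 0).coeff (w₁.length + w₂.length - i) := by
        rw [scaleRoots_zero, hRd, show w₁.length + w₂.length - i = (w₁.length - i) + w₂.length by omega,
          mul_smul_comm, coeff_smul, coeff_mul_X_pow, smul_eq_mul, leadingCoeff, hRd]
        have := hPs i hle
        nlinarith [mul_pos this hlead]
      exact nhdsWithin_le_nhds (hcont.continuousAt.eventually (lt_mem_nhds hval))
    · obtain ⟨j, rfl⟩ := Nat.exists_eq_add_of_le hgt.le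
      rw [sgnAt_append_right, show w₁.length + w₂.length - (w₁.length + j) = w₂.length - j by omega]
      set m := w₂.length - j with hm
      -- The coefficient is `ε ^ (d₂ - m)` times an expression continuous in `ε`.
      have hfac : ∀ ε : ℝ, (P * R.scaleRoots ε).coeff m =
          ε ^ (w₂.length - m) *
            ∑ x ∈ Finset.HasAntidiagonal.antidiagonal m, P.coeff x.1 * R.coeff x.2 * ε ^ x.1 := by
        intro ε
        rw [coeff_mul, Finset.mul_sum]
        refine Finset.sum_congr rfl fun x hx => ?_
        rw [Finset.HasAntidiagonal.mem_antidiagonal] at hx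
        rw [coeff_scaleRoots, hRd, show w₂.length - x.2 = (w₂.length - m) + x.1 by omega, pow_add]
        ring
      have hcont : Continuous fun ε : ℝ => sgnAt w₁ w₁.length * sgnAt w₂ j *
          ∑ x ∈ Finset.HasAntidiagonal.antidiagonal m, P.coeff x.1 * R.coeff x.2 * ε ^ x.1 := by
        fun_prop
      have hval : 0 < sgnAt w₁ w₁.length * sgnAt w₂ j *
          ∑ x ∈ Finset.HasAntidiagonal.antidiagonal m, P.coeff x.1 * R.coeff x.2 * (0 : ℝ) ^ x.1 := by
        rw [Finset.sum_eq_single (0, m)]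
        · have h1 := hPs w₁.length le_rfl
          have h2 := hRs j (by omega)
          rw [Nat.sub_self] at h1
          have := mul_pos h1 h2
          simp only [pow_zero, mul_one]
          linarith
        · rintro ⟨a, b⟩ hx hne
          have : a ≠ 0 := by
            rintro rfl
            simp at hx
            exact hne (by rw [hx])
          simp [this]
        · simp
      filter_upwards [nhdsWithin_le_nhds (hcont.continuousAt.eventually (lt_mem_nhds hval)),
        self_mem_nhdsWithin] with ε hε hpos
      rw [hfac]
      have := mul_pos (pow_pos (Set.mem_Ioi.1 hpos) (w₂.length - m)) hε
      linarith
  -- The rescaled roots of `R` avoid the (nonzero) roots of `P` for small `ε`.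
  have hroot : ∀ x ∈ P.roots.toFinset ×ˢ R.roots.toFinset,
      ∀ᶠ ε : ℝ in nhdsWithin 0 (Set.Ioi 0), ε * x.2 ≠ x.1 := by
    rintro ⟨x, y⟩ hxy
    have hx : x ≠ 0 := by
      rintro rfl
      simp only [Finset.mem_product, Multiset.mem_toFinset, mem_roots hPne, IsRoot.def] at hxy
      exact hP0 (by rw [coeff_zero_eq_eval_zero]; exact hxy.1)
    have hcont : Continuous fun ε : ℝ => ε * y := by fun_prop
    refine nhdsWithin_le_nhds (hcont.continuousAt.eventually_ne ?_)
    simpa using hx.symm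
  obtain ⟨ε, hε, hs, hr⟩ := (Filter.Eventually.and
    (self_mem_nhdsWithin : ∀ᶠ ε : ℝ in nhdsWithin 0 (Set.Ioi 0), 0 < ε)
    (((Filter.eventually_all_finset _).2 hsign).and
      ((Filter.eventually_all_finset _).2 hroot))).exists
  have hroots : (P * R.scaleRoots ε).roots = P.roots + R.roots.map (ε * ·) := by
    rw [roots_mul (mul_ne_zero hPne (scaleRoots_ne_zero hRne ε)),
      roots_scaleRoots _ (isUnit_iff_ne_zero.2 hε.ne')]
  refine ⟨P * R.scaleRoots ε, ?_, fun i hi => hs i (Finset.mem_range.2 (by omega)), ?_, ?_, ?_⟩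
  · rw [natDegree_mul hPne (scaleRoots_ne_zero hRne ε), natDegree_scaleRoots, hPd, hRd,
      List.length_append]
  · rw [hroots, Multiset.countP_add, hPp, Multiset.countP_map, ← hRp, Multiset.countP_eq_card_filter]
    congr 2
    exact Multiset.filter_congr fun x _ => by simp [hε]
  · rw [hroots, Multiset.countP_add, hPn, Multiset.countP_map, ← hRn, Multiset.countP_eq_card_filter]
    congr 2
    exact Multiset.filter_congr fun x _ => by simp [mul_neg_iff, hε, not_lt.2 hε.le]
  · rw [hroots, Multiset.nodup_add]
    refine ⟨hPnd, hRnd.map (mul_right_injective₀ hε.ne'), ?_⟩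
    rw [Multiset.disjoint_left]
    intro x hx hx'
    obtain ⟨y, hy, rfl⟩ := Multiset.mem_map.1 hx'
    exact hr (_, y) (Finset.mem_product.2 ⟨Multiset.mem_toFinset.2 hx, Multiset.mem_toFinset.2 hy⟩)
      rfl

lemma sgnAt_map_not (w : List Bool) {i : ℕ} (hi : i ≤ w.length) :
    sgnAt (w.map not) i = (-1) ^ i * sgnAt w i := by
  induction i generalizing w with
  | zero => simp [sgnAt]
  | succ i ih =>
    cases w with
    | nil => simp at hi
    | cons b w =>
      have := ih w (by simpa using hi)
      simp only [sgnAt, List.map_cons, List.take_succ_cons, List.prod_cons] at this ⊢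
      rw [this]
      cases b <;> simp [pow_succ]

/-- The substitution `x ↦ -x`. -/
lemma WordRealizable.neg {w : List Bool} {p n : ℕ} (h : WordRealizable w p n) :
    WordRealizable (w.map not) n p := by
  obtain ⟨Q, hd, hs, hp, hn, hnd⟩ := h
  have hroots : (Q.scaleRoots (-1)).roots = Q.roots.map (-1 * ·) :=
    roots_scaleRoots _ isUnit_one.neg
  refine ⟨Q.scaleRoots (-1), by rw [natDegree_scaleRoots, hd, List.length_map], ?_, ?_, ?_, ?_⟩
  · intro i hi
    rw [List.length_map] at hi ⊢
    rw [sgnAt_map_not _ hi, coeff_scaleRoots, hd, show w.length - (w.length - i) = i by omega]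
    have h1 : ((-1 : ℝ) ^ i) * (-1) ^ i = 1 := by rw [← mul_pow]; simp
    have := hs i hi
    calc (0 : ℝ) < sgnAt w i * Q.coeff (w.length - i) := this
      _ = (((-1 : ℝ) ^ i) * (-1) ^ i) * (sgnAt w i * Q.coeff (w.length - i)) := by rw [h1, one_mul]
      _ = _ := by ring
  · rw [hroots, Multiset.countP_map, ← hn, Multiset.countP_eq_card_filter]
    simp
  · rw [hroots, Multiset.countP_map, ← hp, Multiset.countP_eq_card_filter]
    simp
  · rw [hroots]
    exact hnd.map (mul_right_injective₀ (by norm_num))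

lemma wordPat_length (s : ℝ) (w : List Bool) : (wordPat s w).length = w.length + 1 := by
  induction w generalizing s with
  | nil => simp [wordPat]
  | cons b w ih => simp [wordPat, ih]

lemma wordPat_getElem (s : ℝ) (w : List Bool) (i : ℕ) (hi : i < (wordPat s w).length) :
    (wordPat s w)[i] = s * sgnAt w i := by
  induction w generalizing s i with
  | nil =>
    simp only [wordPat, List.length_singleton, Nat.lt_one_iff] at hi
    subst hi
    simp [wordPat, sgnAt]
  | cons b w ih =>
    cases i with
    | zero => simp [wordPat, sgnAt]
    | succ i =>
      have := ih (if b then -s else s) i (by simpa [wordPat] using hi)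
      simp only [wordPat, List.getElem_cons_succ, this, sgnAt, List.take_succ_cons, List.map_cons,
        List.prod_cons]
      cases b <;> simp

lemma WordRealizable.realizable {w : List Bool} {p n : ℕ} (h : WordRealizable w p n) :
    Realizable (wordPat 1 w) p n := by
  obtain ⟨Q, hd, hs, hr⟩ := h
  refine ⟨Q, ⟨by rw [wordPat_length, hd], fun i => ?_⟩, hr⟩
  have hi : (i : ℕ) < w.length + 1 := wordPat_length 1 w ▸ i.2
  rw [List.get_eq_getElem, wordPat_getElem, one_mul, hd]
  exact hs i (by omega)

lemma exists_wordPat (s : ℝ) (l : List ℝ) (h : ∀ x ∈ s :: l, x = 1 ∨ x = -1) :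
    ∃ w : List Bool, s :: l = wordPat s w := by
  induction l generalizing s with
  | nil => exact ⟨[], rfl⟩
  | cons t l ih =>
    obtain ⟨w, hw⟩ := ih t fun x hx => h x (List.mem_cons_of_mem _ hx)
    have hs := h s (by simp)
    have ht := h t (by simp)
    by_cases hst : t = s
    · exact ⟨false :: w, by rw [hw]; simp [wordPat, hst]⟩
    · refine ⟨true :: w, ?_⟩
      have : -s = t := by rcases hs with rfl | rfl <;> rcases ht with rfl | rfl <;> simp_all
      rw [hw]; simp [wordPat, this]

lemma signChanges_wordPat (s : ℝ) (hs : s ≠ 0) (w : List Bool) :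
    signChanges (wordPat s w) = w.count true := by
  induction w generalizing s with
  | nil => simp [signChanges, wordPat]
  | cons b w ih =>
    have hcons : ∀ t : ℝ, signChanges (s :: wordPat t w) =
        signChanges (wordPat t w) + if s * t < 0 then 1 else 0 := by
      intro t
      cases w <;> simp [signChanges, wordPat, List.countP_cons]
    have hss : 0 < s * s := mul_self_pos.2 hs
    cases b
    · simp [wordPat, hcons, ih s hs, not_lt.2 hss.le]
    · simp [wordPat, hcons, ih (-s) (neg_ne_zero.2 hs), hss]

/-! ### Explicit pieces and the search for concatenations -/

/-- The polynomial with integer coefficients `l`, listed from the constant term upwards. -/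
noncomputable def ofCoeffs : List ℤ → ℝ[X]
  | [] => 0
  | a :: l => C (a : ℝ) + X * ofCoeffs l

/-- Coefficients of `c + (X - r) * ofCoeffs l`. -/
def mulLin (r : ℤ) : ℤ → List ℤ → List ℤ
  | c, [] => [c]
  | c, a :: l => (c - r * a) :: mulLin r a l

/-- Coefficients of `c + e * X + (X ^ 2 + u * X + v) * ofCoeffs l`. -/
def mulQuad (u v : ℤ) : ℤ → ℤ → List ℤ → List ℤ
  | c, e, [] => [c, e]
  | c, e, a :: l => (c + v * a) :: mulQuad u v (e + u * a) a l

lemma ofCoeffs_mulLin (r c : ℤ) (l : List ℤ) :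
    ofCoeffs (mulLin r c l) = C (c : ℝ) + (X - C (r : ℝ)) * ofCoeffs l := by
  induction l generalizing c with
  | nil => simp [mulLin, ofCoeffs]
  | cons a l ih =>
    simp only [mulLin, ofCoeffs, ih]
    push_cast
    simp only [map_sub, map_mul]
    ring

lemma ofCoeffs_mulQuad (u v c e : ℤ) (l : List ℤ) :
    ofCoeffs (mulQuad u v c e l) =
      C (c : ℝ) + C (e : ℝ) * X + (X ^ 2 + C (u : ℝ) * X + C (v : ℝ)) * ofCoeffs l := by
  induction l generalizing c e with
  | nil => simp [mulQuad, ofCoeffs]; ring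
  | cons a l ih =>
    simp only [mulQuad, ofCoeffs, ih]
    push_cast
    simp only [map_add, map_mul]
    ring

lemma coeff_ofCoeffs (l : List ℤ) (i : ℕ) : (ofCoeffs l).coeff i = (l.getD i 0 : ℤ) := by
  induction l generalizing i with
  | nil => simp [ofCoeffs]
  | cons a l ih =>
    cases i with
    | zero => simp [ofCoeffs]
    | succ i => rw [ofCoeffs, coeff_add, coeff_C_succ, zero_add, coeff_X_mul, ih]; simp

/-- Coefficients of the product of all `X - r`, `r ∈ rs`, and all `X ^ 2 + u * X + v`,
`(u, v) ∈ qs`. -/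
def expandCoeffs (rs : List ℤ) (qs : List (ℤ × ℤ)) : List ℤ :=
  rs.foldr (fun r l => mulLin r 0 l) (qs.foldr (fun q l => mulQuad q.1 q.2 0 0 l) [1])

lemma roots_quad {u v : ℤ} (h : u * u < 4 * v) :
    (X ^ 2 + C (u : ℝ) * X + C (v : ℝ) : ℝ[X]) ≠ 0 ∧
      (X ^ 2 + C (u : ℝ) * X + C (v : ℝ) : ℝ[X]).roots = 0 := by
  have h' : (u : ℝ) * u < 4 * v := by exact_mod_cast h
  have hev : ∀ x : ℝ, (X ^ 2 + C (u : ℝ) * X + C (v : ℝ) : ℝ[X]).eval x ≠ 0 := by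
    intro x hx
    simp only [eval_add, eval_pow, eval_X, eval_mul, eval_C] at hx
    nlinarith [sq_nonneg (2 * x + u)]
  refine ⟨fun h0 => hev 0 (by rw [h0, eval_zero]), ?_⟩
  exact Multiset.eq_zero_of_forall_notMem fun x hx => hev x (isRoot_of_mem_roots hx)

lemma roots_expandCoeffs (rs : List ℤ) (qs : List (ℤ × ℤ)) (hq : ∀ q ∈ qs, q.1 * q.1 < 4 * q.2) :
    ofCoeffs (expandCoeffs rs qs) ≠ 0 ∧
      (ofCoeffs (expandCoeffs rs qs)).roots = (rs.map (Int.cast : ℤ → ℝ) : List ℝ) := by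
  induction rs with
  | nil =>
    induction qs with
    | nil => simp [expandCoeffs, ofCoeffs]
    | cons q qs ih =>
      obtain ⟨h0, hr⟩ := ih fun q' h' => hq q' (List.mem_cons_of_mem _ h')
      obtain ⟨g0, gr⟩ := roots_quad (hq q (by simp))
      have he : ofCoeffs (expandCoeffs [] (q :: qs)) =
          (X ^ 2 + C (q.1 : ℝ) * X + C (q.2 : ℝ)) * ofCoeffs (expandCoeffs [] qs) := by
        simp [expandCoeffs, ofCoeffs_mulQuad]
      rw [he]
      refine ⟨mul_ne_zero g0 h0, ?_⟩
      rw [roots_mul (mul_ne_zero g0 h0), gr, hr]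
      simp
  | cons r rs ih =>
    obtain ⟨h0, hr⟩ := ih
    have he : ofCoeffs (expandCoeffs (r :: rs) qs) = (X - C (r : ℝ)) * ofCoeffs (expandCoeffs rs qs) := by
      simp [expandCoeffs, ofCoeffs_mulLin]
    rw [he]
    refine ⟨mul_ne_zero (X_sub_C_ne_zero _) h0, ?_⟩
    rw [roots_mul (mul_ne_zero (X_sub_C_ne_zero _) h0), roots_X_sub_C, hr]
    simp

/-- A small couple together with a polynomial realizing it, given by its integer real roots and
by the pairs `(u, v)` of its factors `X ^ 2 + u * X + v` without real roots. -/
structure Piece where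
  /-- The word of sign changes (`true`) and preservations (`false`). -/
  word : List Bool
  /-- The number of positive roots. -/
  pos : ℕ
  /-- The number of negative roots. -/
  neg : ℕ
  /-- The real roots. -/
  rts : List ℤ
  /-- The quadratic factors. -/
  quads : List (ℤ × ℤ)

/-- Integer version of `sgnAt`. -/
def sgnAtZ (w : List Bool) (i : ℕ) : ℤ :=
  ((w.take i).map fun b => if b then (-1 : ℤ) else 1).prod

lemma cast_sgnAtZ (w : List Bool) (i : ℕ) : (sgnAtZ w i : ℝ) = sgnAt w i := by
  simp only [sgnAtZ, sgnAt, Int.cast_list_prod, List.map_map]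
  congr 2
  funext b
  cases b <;> simp

/-- The polynomial of the piece realizes its couple; every clause is a finite computation. -/
def Piece.Valid (b : Piece) : Prop :=
  (∀ q ∈ b.quads, q.1 * q.1 < 4 * q.2) ∧ b.rts.Nodup ∧
  b.rts.countP (fun x => 0 < x) = b.pos ∧ b.rts.countP (fun x => x < 0) = b.neg ∧
  (expandCoeffs b.rts b.quads).length = b.word.length + 1 ∧
  ∀ i ∈ List.range (b.word.length + 1),
    0 < sgnAtZ b.word i * (expandCoeffs b.rts b.quads).getD (b.word.length - i) 0

instance : DecidablePred Piece.Valid := fun b => by unfold Piece.Valid; infer_instance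

lemma Piece.Valid.wordRealizable {b : Piece} (h : b.Valid) :
    WordRealizable b.word b.pos b.neg := by
  obtain ⟨hq, hnd, hp, hn, hlen, hs⟩ := h
  obtain ⟨-, hr⟩ := roots_expandCoeffs b.rts b.quads hq
  have hsign : ∀ i ≤ b.word.length, 0 < sgnAt b.word i *
      (ofCoeffs (expandCoeffs b.rts b.quads)).coeff (b.word.length - i) := by
    intro i hi
    have := hs i (List.mem_range.2 (by omega))
    rw [coeff_ofCoeffs, ← cast_sgnAtZ]
    exact_mod_cast this
  refine ⟨ofCoeffs (expandCoeffs b.rts b.quads), ?_, hsign, ?_, ?_, ?_⟩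
  · refine natDegree_eq_of_le_of_coeff_ne_zero (natDegree_le_iff_coeff_eq_zero.2 fun i hi => ?_) ?_
    · rw [coeff_ofCoeffs, List.getD_eq_default _ _ (by omega), Int.cast_zero]
    · intro h0
      simpa [h0] using hsign 0 (Nat.zero_le _)
  · rw [hr, Multiset.coe_countP, List.countP_map, ← hp]
    congr 1
    funext x
    simp
  · rw [hr, Multiset.coe_countP, List.countP_map, ← hn]
    congr 1
    funext x
    simp
  · rw [hr, Multiset.coe_nodup]
    exact hnd.map Int.cast_injective

/-- If `v` is a prefix of `w`, the remainder of `w`. -/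
def strip : List Bool → List Bool → Option (List Bool)
  | [], w => some w
  | _ :: _, [] => none
  | a :: v, b :: w => if a = b then strip v w else none

lemma strip_eq {v w w' : List Bool} (h : strip v w = some w') : w = v ++ w' := by
  induction v generalizing w with
  | nil => simpa [strip] using h
  | cons a v ih =>
    cases w with
    | nil => simp [strip] at h
    | cons b w =>
      by_cases hab : a = b
      · simp only [strip, hab, if_true] at h
        simp [hab, ih h]
      · simp [strip, hab] at h

/-- Depth-first search for a way to write `w` as a concatenation of at most `k` pieces from `B`
whose pairs add up to `(p, n)`. -/
def tile (B : List Piece) : ℕ → List Bool → ℕ → ℕ → Bool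
  | _, [], p, n => p == 0 && n == 0
  | 0, _ :: _, _, _ => false
  | k + 1, a :: w, p, n => B.any fun b =>
      match strip b.word (a :: w) with
      | none => false
      | some w' => Nat.ble b.pos p && (Nat.ble b.neg n && tile B k w' (p - b.pos) (n - b.neg))

lemma wordRealizable_of_tile {B : List Piece} (hB : ∀ b ∈ B, b.Valid) {k : ℕ} {w : List Bool}
    {p n : ℕ} (h : tile B k w p n = true) : WordRealizable w p n := by
  induction k generalizing w p n with
  | zero =>
    cases w with
    | nil =>
      simp only [tile, Bool.and_eq_true, beq_iff_eq] at h
      obtain ⟨rfl, rfl⟩ := h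
      exact ⟨1, by simp, by simp [sgnAt], by simp [RootData]⟩
    | cons a w => simp [tile] at h
  | succ k ih =>
    cases w with
    | nil =>
      simp only [tile, Bool.and_eq_true, beq_iff_eq] at h
      obtain ⟨rfl, rfl⟩ := h
      exact ⟨1, by simp, by simp [sgnAt], by simp [RootData]⟩
    | cons a w =>
      simp only [tile, List.any_eq_true] at h
      obtain ⟨b, hb, h⟩ := h
      split at h
      · simp at h
      · rename_i w' hw'
        simp only [Bool.and_eq_true, Nat.ble_eq] at h
        obtain ⟨hp, hn, ht⟩ := h
        have := (hB b hb).wordRealizable.append (ih ht)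
        rwa [← strip_eq hw', Nat.add_sub_cancel' hp, Nat.add_sub_cancel' hn] at this

section

local notation "P" => false
local notation "N" => true

/-- The pieces from which all couples of degree `11` under consideration are concatenated
(`P` is a sign preservation and `N` a sign change). -/
def pieces : List Piece :=
  [⟨[P], 0, 1, [-1], []⟩,
   ⟨[N], 1, 0, [1], []⟩,
   ⟨[P, P], 0, 0, [], [(1, 1)]⟩,
   ⟨[N, N], 0, 0, [], [(-1, 1)]⟩,
   ⟨[P, N, P], 1, 0, [2], [(3, 4)]⟩,
   ⟨[N, P, N], 0, 1, [-2], [(-3, 5)]⟩,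
   ⟨[P, N, N, P], 0, 0, [], [(4, 5), (-3, 5)]⟩,
   ⟨[N, P, P, N], 0, 0, [], [(3, 4), (-4, 5)]⟩,
   ⟨[N, P, N, P], 0, 0, [], [(-4, 5), (2, 2)]⟩,
   ⟨[P, N, P, P, N], 0, 3, [-5, -4, -7], [(-6, 10)]⟩,
   ⟨[N, P, P, N, P], 0, 3, [-5, -4, -6], [(-16, 66)]⟩,
   ⟨[N, P, P, P, N], 0, 1, [-2], [(-4, 5), (1, 4)]⟩,
   ⟨[N, P, P, P, P, N], 0, 0, [], [(-13, 43), (11, 50), (0, 45)]⟩,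
   ⟨[P, N, N, N, P, P, N], 0, 3, [-6, -9, -7], [(-2, 53), (-10, 26)]⟩,
   ⟨[N, P, P, N, N, N, P], 0, 3, [-9, -5, -7], [(-2, 41), (-20, 101)]⟩,
   ⟨[N, P, P, N, N, P, N], 0, 3, [-21, -20, -12], [(-45, 507), (-9, 50)]⟩,
   ⟨[N, P, N, N, P, P, N], 0, 3, [-9, -11, -16], [(-18, 82), (-37, 806)]⟩,
   ⟨[N, P, P, P, P, N, P], 0, 3, [-5, -7, -4], [(-17, 73), (-1, 108)]⟩,
   ⟨[P, P, P, N, P, P, P, N, P, P], 0, 8, [-15, -20, -14, -12, -13, -9, -16, -11],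
     [(-21, 111)]⟩,
   ⟨[P, P, N, P, P, P, N, P, P, P], 0, 8, [-9, -6, -8, -10, -11, -13, -7, -12],
     [(-23, 133)]⟩]

lemma pieces_valid : ∀ b ∈ pieces, b.Valid := by decide +kernel

/-- The words, with their numbers of negative roots, of the excluded couples with one positive
root. -/
def excluded : List (List Bool × ℕ) :=
  [([N, P, P, P, P, N, P, P, P, P, N], 8),
   ([N, P, P, P, N, P, P, P, P, P, N], 8),
   ([N, P, P, P, P, P, N, P, P, P, N], 8),
   ([N, P, P, P, N, P, P, P, P, N, P], 8),
   ([P, N, P, P, P, P, N, P, P, P, N], 8),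
   ([N, P, P, P, P, N, P, P, P, N, P], 8),
   ([P, N, P, P, P, N, P, P, P, P, N], 8),
   ([P, N, P, P, P, N, P, P, P, N, P], 8),
   ([N, P, P, P, N, P, P, P, N, N, N], 6),
   ([N, N, N, P, P, P, N, P, P, P, N], 6),
   ([N, P, P, P, N, N, N, P, P, P, N], 6),
   ([N, P, P, N, N, N, N, N, P, P, N], 4)]

/-- All words of length `k`. -/
def words : ℕ → List (List Bool)
  | 0 => [[]]
  | k + 1 => (words k).map (List.cons P) ++ (words k).map (List.cons N)

lemma mem_words (w : List Bool) : w ∈ words w.length := by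
  induction w with
  | nil => simp [words]
  | cons b w ih => cases b <;> simp [words, ih]

lemma tile_or_excluded : ∀ w ∈ words 11, ∀ n ∈ List.range 12,
    1 ≤ w.count N → 1 ≤ n → n ≤ 11 - w.count N → (w.count N - 1) % 2 = 0 →
      (11 - w.count N - n) % 2 = 0 →
      tile pieces 11 w 1 n = true ∨ (w, n) ∈ excluded := by
  decide +kernel

/-- Every admissible couple of degree `11` with one positive and at least one negative root is
realizable or excluded. -/
lemma wordRealizable_or_excluded {w : List Bool} (hw : w.length = 11) {n : ℕ} (hn : 1 ≤ n)
    (hc : 1 ≤ w.count N) (hn' : n ≤ 11 - w.count N) (hce : Even (w.count N - 1))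
    (hne : Even (11 - w.count N - n)) : WordRealizable w 1 n ∨ (w, n) ∈ excluded := by
  rcases tile_or_excluded w (hw ▸ mem_words w) n (List.mem_range.2 (by omega)) hc hn hn'
    (Nat.even_iff.1 hce) (Nat.even_iff.1 hne) with h | h
  · exact Or.inl (wordRealizable_of_tile pieces_valid h)
  · exact Or.inr h

end

/-! ### Newton's inequalities and nonrealizability -/

/-- Newton's inequalities for a polynomial with `n` negative roots: its coefficients divided by
binomial coefficients form a positive log-concave sequence. -/
lemma exists_newton (s : Multiset ℝ) (hs : ∀ b ∈ s, 0 < b) :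
    ∃ p : ℕ → ℝ, (∀ k, (s.map fun b => X + C b).prod.coeff k = (s.card.choose k : ℝ) * p k) ∧
      (∀ k ≤ s.card, 0 < p k) ∧ ∀ k, k + 2 ≤ s.card → p k * p (k + 2) ≤ p (k + 1) ^ 2 := by
  induction s using Multiset.induction_on with
  | empty =>
    refine ⟨fun _ => 1, fun k => ?_, by simp, by simp⟩
    cases k <;> simp [coeff_one]
  | cons b s ih =>
    obtain ⟨p, hc, hpos, hlc⟩ := ih fun x hx => hs x (Multiset.mem_cons_of_mem hx)
    have hb : 0 < b := hs b (Multiset.mem_cons_self b s)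
    set n := s.card with hn
    have hn1 : (0 : ℝ) < n + 1 := by positivity
    refine ⟨fun k => (((n : ℝ) + 1 - k) * b * p k + k * p (k - 1)) / (n + 1), ?_, ?_, ?_⟩
    · intro k
      rw [Multiset.map_cons, Multiset.prod_cons, Multiset.card_cons, ← hn, add_mul, coeff_add,
        coeff_C_mul, hc]
      cases k with
      | zero => simp; field_simp
      | succ k =>
        rw [coeff_X_mul, hc]
        have h1 : ((n : ℝ) + 1) * n.choose k = (n + 1).choose (k + 1) * (k + 1) := by
          exact_mod_cast Nat.add_one_mul_choose_eq n k
        have h2 : ((n + 1).choose (k + 1) : ℝ) = n.choose k + n.choose (k + 1) := by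
          exact_mod_cast Nat.choose_succ_succ n k
        have h3 : ((n : ℝ) + 1) * n.choose (k + 1) = (n + 1).choose (k + 1) * (n - k) := by
          linear_combination (-(n : ℝ) - 1) * h2 - h1
        simp only [Nat.add_sub_cancel]
        push_cast
        rw [mul_div_assoc', eq_div_iff hn1.ne']
        linear_combination p k * h1 + b * p (k + 1) * h3
    · intro k hk
      rw [Multiset.card_cons, ← hn] at hk
      refine div_pos ?_ hn1
      rcases hk.lt_or_eq with hlt | rfl
      · have hk' : (k : ℝ) + 1 ≤ n + 1 := by exact_mod_cast hlt
        have := mul_pos (mul_pos (by linarith : (0 : ℝ) < n + 1 - k) hb) (hpos k (by omega))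
        have := mul_nonneg (Nat.cast_nonneg (α := ℝ) k) (hpos (k - 1) (by omega)).le
        linarith
      · have := mul_pos hn1 (hpos n le_rfl)
        simpa using this
    · intro k hk
      rw [Multiset.card_cons, ← hn] at hk
      obtain ⟨α, hα⟩ : ∃ α : ℕ, n = k + 1 + α := ⟨n - (k + 1), by omega⟩
      have hαr : (n : ℝ) = k + 1 + α := by exact_mod_cast hα
      simp only [Nat.add_sub_cancel, show k + 2 - 1 = k + 1 by omega]
      rw [div_mul_div_comm, div_pow, ← sq]
      refine div_le_div_of_nonneg_right ?_ (sq_nonneg _)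
      push_cast
      have hB := hpos k (by omega)
      have hC := hpos (k + 1) (by omega)
      -- With `A, B, D, E` four consecutive terms, the step reduces to `(b * D - B) ^ 2 ≥ 0`.
      have hAC : (k : ℝ) * (p (k - 1) * p (k + 1)) ≤ k * p k ^ 2 := by
        cases k with
        | zero => simp
        | succ k =>
          exact mul_le_mul_of_nonneg_left (hlc k (by omega)) (Nat.cast_nonneg _)
      have hBD : (α : ℝ) * (p k * p (k + 2)) ≤ α * p (k + 1) ^ 2 := by
        rcases Nat.eq_zero_or_pos α with rfl | h
        · simp
        · exact mul_le_mul_of_nonneg_left (hlc k (by omega)) (Nat.cast_nonneg _)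
      have hAD : (α : ℝ) * k * (p (k - 1) * p (k + 2)) ≤ α * k * (p k * p (k + 1)) := by
        rcases Nat.eq_zero_or_pos α with rfl | h
        · simp
        cases k with
        | zero => simp
        | succ k =>
          refine mul_le_mul_of_nonneg_left ?_ (by positivity)
          rw [Nat.add_sub_cancel]
          have hA := hpos k (by omega)
          have hD := hpos (k + 3) (by omega)
          have h1 := hlc k (by omega)
          have h2 := hlc (k + 1) (by omega)
          have h3 := mul_le_mul h1 h2 (by positivity) (by positivity)
          have h4 : 0 < p (k + 1) * p (k + 2) := mul_pos hB hC
          refine le_of_mul_le_mul_right ?_ h4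
          simp only [show k + 1 + 2 = k + 3 from rfl, show k + 1 + 1 = k + 2 from rfl] at *
          nlinarith [h3]
      generalize p (k - 1) = A at *
      generalize p k = B at *
      generalize p (k + 1) = D at *
      generalize p (k + 2) = E at *
      rw [hαr]
      have e1 := mul_le_mul_of_nonneg_left hBD (by positivity : (0 : ℝ) ≤ (α + 2) * b ^ 2)
      have e2 := mul_le_mul_of_nonneg_left hAC (by positivity : (0 : ℝ) ≤ (k + 2 : ℝ))
      have e3 := mul_le_mul_of_nonneg_left hAD hb.le
      nlinarith [sq_nonneg (b * D - B), e1, e2, e3]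

/-- The core estimate, normalized so that the complex pair has modulus `1`: `δ` is the positive
root, `X ^ 2 - U * X + 1` the factor of the complex pair, and `p k` the normalized elementary
symmetric functions of the absolute values of the eight negative roots. The hypotheses are the
signs of three coefficients of the product; log-concavity of `p` makes them contradictory. -/
lemma core_estimate (p : ℕ → ℝ) (hp : ∀ k ≤ 8, 0 < p k) (hp0 : p 0 = 1)
    (hlc : ∀ k, k + 2 ≤ 8 → p k * p (k + 2) ≤ p (k + 1) ^ 2) {δ U : ℝ} (hδ : 0 < δ) (hδ1 : δ ≤ 1)
    (hU : U ^ 2 < 4) (h1 : 8 * p 1 < δ + U) (h10 : δ * (8 * p 7) < (1 + δ * U) * p 8)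
    (h4 : 70 * p 4 - (δ + U) * (56 * p 3) + (1 + δ * U) * (28 * p 2) - δ * (8 * p 1) < 0) :
    False := by
  -- The ratios `r k = p (k + 1) / p k` decrease.
  obtain ⟨r, hr⟩ : ∃ r : ℕ → ℝ, ∀ k, r k = p (k + 1) / p k := ⟨_, fun _ => rfl⟩
  have hstep : ∀ k, k + 2 ≤ 8 → r (k + 1) ≤ r k := by
    intro k hk
    rw [hr, hr, div_le_div_iff₀ (hp _ (by omega)) (hp _ (by omega))]
    nlinarith [hlc k hk]
  have hmul : ∀ k ≤ 7, p (k + 1) = r k * p k := fun k hk => by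
    rw [hr, div_mul_cancel₀ _ (hp k (by omega)).ne']
  have hK : 0 < 1 + δ * U := by
    by_contra h
    nlinarith [hp 7 (by omega), hp 8 (by omega), mul_pos hδ (hp 7 (by omega))]
  have s0 := hstep 0 (by omega)
  have s1 := hstep 1 (by omega)
  have s2 := hstep 2 (by omega)
  have s3 := hstep 3 (by omega)
  have s4 := hstep 4 (by omega)
  have s5 := hstep 5 (by omega)
  have s6 := hstep 6 (by omega)
  simp only [Nat.reduceAdd] at s0 s1 s2 s3 s4 s5 s6
  have hr7 : 8 * δ < (1 + δ * U) * r 7 := by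
    rw [hmul 7 le_rfl] at h10
    have := hp 7 (by omega)
    refine lt_of_mul_lt_mul_right ?_ this.le
    linarith
  have hr7pos : 0 < r 7 := by
    by_contra h
    nlinarith
  have m0 := hmul 0 (by omega)
  have m1 := hmul 1 (by omega)
  have m2 := hmul 2 (by omega)
  have m3 := hmul 3 (by omega)
  simp only [Nat.reduceAdd] at m0 m1 m2 m3
  rw [hp0, mul_one] at m0
  have hp1 := hp 1 (by omega)
  have hp2 := hp 2 (by omega)
  have hp3 := hp 3 (by omega)
  have hU2 : U < 2 := by nlinarith
  have hU2' : -2 < U := by nlinarith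
  -- The inequality between arithmetic and harmonic means forces `δ` to be small.
  have hAH : 64 * δ < (δ + U) * (1 + δ * U) := by
    have h70 : r 7 ≤ p 1 := by linarith
    have e1 := mul_le_mul_of_nonneg_left h70 hK.le
    have e2 := mul_lt_mul_of_pos_left h1 hK
    linarith
  have hδU : 0 < δ + U := by linarith
  have hUpos : 0 < U := by
    by_contra h
    have e1 : δ * U ≤ 0 := mul_nonpos_of_nonneg_of_nonpos hδ.le (not_lt.1 h)
    have e2 : (δ + U) * (1 + δ * U) ≤ (δ + U) * 1 :=
      mul_le_mul_of_nonneg_left (by linarith) hδU.le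
    linarith
  have hδU2 : δ * U < δ * 2 := mul_lt_mul_of_pos_left hU2 hδ
  have hδs : δ < 7 / 200 := by
    have e1 : (δ + U) * (1 + δ * U) < (δ + 2) * (1 + δ * 2) :=
      mul_lt_mul'' (by linarith) (by linarith) hδU.le hK.le
    by_contra h
    have e2 := mul_nonneg (sub_nonneg.2 (not_lt.1 h)) (sub_nonneg.2 hδ1)
    linarith
  have hKs : 1 + δ * U < 107 / 100 := by linarith
  have hr3 : 36 / 5 * δ ≤ r 3 := by
    have h73 : r 7 ≤ r 3 := by linarith
    have : (1 + δ * U) * r 7 ≤ 107 / 100 * r 7 := mul_le_mul_of_nonneg_right hKs.le hr7pos.le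
    linarith
  -- The inequality `h4` with `p 4 = r 3 * p 3` bounded below through `hr3`.
  have hmain : 28 * (1 + δ * U) * p 2 - 8 * δ * p 1 < 56 * (U - 8 * δ) * r 2 * p 2 := by
    have : 36 / 5 * δ * p 3 ≤ r 3 * p 3 := mul_le_mul_of_nonneg_right hr3 hp3.le
    rw [m3] at h4
    have e : 56 * (U - 8 * δ) * r 2 * p 2 = 56 * (U - 8 * δ) * p 3 := by rw [m2]; ring
    rw [e]
    linarith
  have hKp : 8 * δ * p 1 ≤ (1 + δ * U) * p 2 := by
    have h71 : r 7 ≤ r 1 := by linarith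
    have h : (1 + δ * U) * r 7 ≤ (1 + δ * U) * r 1 := mul_le_mul_of_nonneg_left h71 hK.le
    have := mul_le_mul_of_nonneg_right (hr7.le.trans h) hp1.le
    rw [m1]
    linarith
  have hy : 27 < 56 * (U - 8 * δ) * r 2 := by
    refine lt_of_mul_lt_mul_right ?_ hp2.le
    have : 0 < δ * U * p 2 := by positivity
    linarith
  have hr2pos : 0 < r 2 := by linarith
  have hr2 : 6 / 25 < r 2 := by
    have : 56 * (U - 8 * δ) * r 2 ≤ 112 * r 2 := mul_le_mul_of_nonneg_right (by linarith) hr2pos.le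
    linarith
  have hp12 : 6 / 25 * p 1 ≤ p 2 := by
    rw [m1]
    exact mul_le_mul_of_nonneg_right (by linarith) hp1.le
  have hfin : 28 * (1 + δ * U) - 100 / 3 * δ < 56 * (U - 8 * δ) * r 2 := by
    refine lt_of_mul_lt_mul_right ?_ hp2.le
    have := mul_le_mul_of_nonneg_left hp12 hδ.le
    linarith
  have hU8 : 0 < U - 8 * δ := by
    by_contra h
    have := mul_nonneg (by linarith : 0 ≤ -(U - 8 * δ)) hr2pos.le
    linarith
  have : (U - 8 * δ) * r 2 ≤ (U - 8 * δ) * ((δ + U) / 8) :=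
    mul_le_mul_of_nonneg_left (by linarith) hU8.le
  have hδ2 := mul_pos hδ hδ
  have hδU0 := mul_pos hδ hUpos
  rcases le_total U 1 with hU1 | hU1
  · have : U * U ≤ 1 * 1 := mul_self_le_mul_self hUpos.le hU1
    linarith
  · have : δ * 1 ≤ δ * U := mul_le_mul_of_nonneg_left hU1 hδ.le
    linarith

/-- The contradiction when the positive root `a` does not exceed the modulus `√v` of the complex
pair: rescaling the variable by `√v` reduces it to `core_estimate`. -/
lemma no_realization_of_le (p : ℕ → ℝ) (hp : ∀ k ≤ 8, 0 < p k)
    (hlc : ∀ k, k + 2 ≤ 8 → p k * p (k + 2) ≤ p (k + 1) ^ 2) {a u v : ℝ} (ha : 0 < a)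
    (hv : 0 < v) (hav : a ^ 2 ≤ v) (hu : u ^ 2 < 4 * v) (h1 : 8 * p 1 < (a + u) * p 0)
    (h10 : a * v * (8 * p 7) < (v + a * u) * p 8)
    (h4 : 70 * p 4 - (a + u) * (56 * p 3) + (v + a * u) * (28 * p 2) - a * v * (8 * p 1) < 0) :
    False := by
  obtain ⟨s, hs, rfl⟩ : ∃ s : ℝ, 0 < s ∧ v = s ^ 2 :=
    ⟨√v, Real.sqrt_pos.2 hv, (Real.sq_sqrt hv.le).symm⟩
  have h0 := hp 0 (by omega)
  have has : a ≤ s := by nlinarith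
  obtain ⟨δ, rfl⟩ : ∃ δ, a = δ * s := ⟨a / s, by field_simp⟩
  obtain ⟨U, rfl⟩ : ∃ U, u = U * s := ⟨u / s, by field_simp⟩
  obtain ⟨q, hq⟩ : ∃ q : ℕ → ℝ, ∀ k, p k = q k * s ^ k * p 0 :=
    ⟨fun k => p k / (s ^ k * p 0), fun k => by field_simp⟩
  have hδ : 0 < δ := pos_of_mul_pos_left ha hs.le
  have hqpos : ∀ k ≤ 8, 0 < q k := by
    intro k hk
    have := hp k hk
    rw [hq, mul_assoc] at this
    exact pos_of_mul_pos_left this (by positivity)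
  refine core_estimate q hqpos ?_ ?_ hδ (le_of_mul_le_mul_right (by linarith) hs)
    (U := U) ?_ ?_ ?_ ?_
  · have := hq 0
    rw [pow_zero, mul_one] at this
    exact (mul_eq_right₀ h0.ne').1 this.symm
  · intro k hk
    have := hlc k hk
    rw [hq k, hq (k + 2), hq (k + 1)] at this
    have hpos : 0 < s ^ (2 * k + 2) * p 0 ^ 2 := by positivity
    refine le_of_mul_le_mul_right ?_ hpos
    calc q k * q (k + 2) * (s ^ (2 * k + 2) * p 0 ^ 2)
        = q k * s ^ k * p 0 * (q (k + 2) * s ^ (k + 2) * p 0) := by ring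
      _ ≤ _ := this
      _ = _ := by ring
  · refine lt_of_mul_lt_mul_right ?_ (sq_nonneg s)
    linarith
  · rw [hq 1] at h1
    refine lt_of_mul_lt_mul_right ?_ (by positivity : 0 ≤ s * p 0)
    linarith
  · rw [hq 7, hq 8] at h10
    refine lt_of_mul_lt_mul_right ?_ (by positivity : 0 ≤ s ^ 10 * p 0)
    linarith
  · rw [hq 1, hq 2, hq 3, hq 4] at h4
    refine lt_of_mul_lt_mul_right (a := s ^ 4 * p 0) ?_ (by positivity)
    linarith

/-- Both cases of `no_realization_of_le`, the second one by reversion `x ↦ 1 / x`. -/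
lemma no_realization (p : ℕ → ℝ) (hp : ∀ k ≤ 8, 0 < p k)
    (hlc : ∀ k, k + 2 ≤ 8 → p k * p (k + 2) ≤ p (k + 1) ^ 2) {a u v : ℝ} (ha : 0 < a)
    (hv : 0 < v) (hu : u ^ 2 < 4 * v) (h1 : 8 * p 1 < (a + u) * p 0)
    (h10 : a * v * (8 * p 7) < (v + a * u) * p 8)
    (h4 : 70 * p 4 - (a + u) * (56 * p 3) + (v + a * u) * (28 * p 2) - a * v * (8 * p 1) < 0)
    (h7 : 0 < 8 * p 7 - (a + u) * (28 * p 6) + (v + a * u) * (56 * p 5) - a * v * (70 * p 4)) :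
    False := by
  rcases le_total (a ^ 2) v with hav | hav
  · exact no_realization_of_le p hp hlc ha hv hav hu h1 h10 h4
  · have hp' : ∀ k ≤ 8, 0 < p (8 - k) := fun k _ => hp _ (by omega)
    refine no_realization_of_le (fun k => p (8 - k)) hp' ?_ (a := a⁻¹) (u := u / v) (v := v⁻¹)
      (by positivity) (by positivity) ?_ ?_ ?_ ?_ ?_
    · intro k hk
      have := hlc (8 - (k + 2)) (by omega)
      rw [show 8 - (k + 2) + 2 = 8 - k by omega, show 8 - (k + 2) + 1 = 8 - (k + 1) by omega] at this
      linarith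
    · rw [inv_pow]
      exact inv_anti₀ hv hav
    · rw [div_pow, div_lt_iff₀ (by positivity)]
      calc u ^ 2 < 4 * v := hu
        _ = 4 * v⁻¹ * v ^ 2 := by field_simp
    · simp only [Nat.reduceSub]
      refine lt_of_mul_lt_mul_left ?_ (by positivity : 0 ≤ a * v)
      calc a * v * (8 * p 7) < (v + a * u) * p 8 := h10
        _ = a * v * ((a⁻¹ + u / v) * p 8) := by field_simp
    · simp only [Nat.reduceSub]
      refine lt_of_mul_lt_mul_left ?_ (by positivity : 0 ≤ a * v)
      calc a * v * (a⁻¹ * v⁻¹ * (8 * p 1)) = 8 * p 1 := by field_simp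
        _ < (a + u) * p 0 := h1
        _ = a * v * ((v⁻¹ + a⁻¹ * (u / v)) * p 0) := by field_simp
    · simp only [Nat.reduceSub]
      refine lt_of_mul_lt_mul_left (a := a * v) ?_ (by positivity)
      calc a * v * (70 * p 4 - (a⁻¹ + u / v) * (56 * p 5) + (v⁻¹ + a⁻¹ * (u / v)) * (28 * p 6) -
            a⁻¹ * v⁻¹ * (8 * p 7))
          = -(8 * p 7 - (a + u) * (28 * p 6) + (v + a * u) * (56 * p 5) - a * v * (70 * p 4)) := by
            field_simp; ring
        _ < a * v * 0 := by linarith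

/-- The signs of six coefficients already rule out the root pair `(1, 8)`. -/
lemma not_rootData {Q : ℝ[X]} (hd : Q.natDegree = 11) (h11 : 0 < Q.coeff 11)
    (h10 : Q.coeff 10 < 0) (h7 : Q.coeff 7 < 0) (h4 : 0 < Q.coeff 4) (h1 : 0 < Q.coeff 1)
    (h0 : Q.coeff 0 < 0) : ¬ RootData Q 1 8 := by
  rintro ⟨hpos, hneg, -⟩
  have hQ : Q ≠ 0 := by rintro rfl; simp at h11
  obtain ⟨S, hS, hcard, hSr⟩ := exists_prod_multiset_X_sub_C_mul Q
  -- The roots are one positive number `a` and the negatives of eight positive numbers.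
  rw [Multiset.countP_eq_card_filter] at hpos hneg
  obtain ⟨a, ha⟩ := Multiset.card_eq_one.1 hpos
  have hsplit : Q.roots = {a} + Q.roots.filter (fun x => x < 0) := by
    rw [← ha]
    conv_lhs => rw [← Multiset.filter_add_not (fun x : ℝ => 0 < x) Q.roots]
    congr 1
    refine Multiset.filter_congr fun x hx => ?_
    have hx0 : x ≠ 0 := by
      rintro rfl
      have := isRoot_of_mem_roots hx
      rw [IsRoot.def, ← coeff_zero_eq_eval_zero] at this
      linarith
    exact ⟨fun h => lt_of_le_of_ne (not_lt.1 h) hx0, fun h => not_lt.2 h.le⟩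
  have hapos : 0 < a := by
    have : a ∈ Q.roots.filter (fun x => 0 < x) := by rw [ha]; simp
    exact (Multiset.mem_filter.1 this).2
  obtain ⟨M, hM⟩ : ∃ M : Multiset ℝ, M = (Q.roots.filter fun x => x < 0).map fun x => -x :=
    ⟨_, rfl⟩
  have hMcard : M.card = 8 := by rw [hM, Multiset.card_map, hneg]
  have hMpos : ∀ b ∈ M, 0 < b := by
    intro b hb
    rw [hM] at hb
    obtain ⟨x, hx, rfl⟩ := Multiset.mem_map.1 hb
    exact neg_pos.2 (Multiset.mem_filter.1 hx).2
  have hprod : (Q.roots.map fun x => X - C x).prod =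
      (X - C a) * (M.map fun b => X + C b).prod := by
    rw [hsplit, Multiset.map_add, Multiset.prod_add, hM, Multiset.map_map]
    simp [sub_eq_add_neg]
  have hSd : S.natDegree = 2 := by
    rw [hsplit, Multiset.card_add, hneg, hd, Multiset.card_singleton] at hcard
    omega
  rw [hprod] at hS
  obtain ⟨p, hpc, hpp, hplc⟩ := exists_newton M hMpos
  rw [hMcard] at hpc hpp hplc
  set N := (M.map fun b => X + C b).prod with hN
  -- The remaining factor is `c * (X ^ 2 - u * X + v)` without real roots.
  have hSq := S.as_sum_range_C_mul_X_pow
  rw [hSd] at hSq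
  simp only [Finset.sum_range_succ, Finset.sum_range_zero, zero_add, pow_zero, mul_one, pow_one]
    at hSq
  set c := S.coeff 2 with hc
  have hc0 : c ≠ 0 := by
    rw [hc, ← hSd]
    exact leadingCoeff_ne_zero.2 (by rintro rfl; simp at hSd)
  obtain ⟨u, hu⟩ : ∃ u, S.coeff 1 = -(c * u) := ⟨-(S.coeff 1 / c), by field_simp⟩
  obtain ⟨v, hv⟩ : ∃ v, S.coeff 0 = c * v := ⟨S.coeff 0 / c, by field_simp⟩
  rw [hu, hv] at hSq
  have hdisc : u ^ 2 < 4 * v := by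
    by_contra h
    rw [not_lt] at h
    have hroot : S.eval ((u + √(u ^ 2 - 4 * v)) / 2) = 0 := by
      have hsq := Real.sq_sqrt (sub_nonneg.2 h)
      rw [hSq]
      simp only [eval_add, eval_mul, eval_C, eval_X, eval_pow]
      linear_combination c / 4 * hsq
    have : (u + √(u ^ 2 - 4 * v)) / 2 ∈ S.roots :=
      (mem_roots (by rintro rfl; simp at hSd)).2 hroot
    rw [hSr] at this
    simp at this
  have hvpos : 0 < v := by nlinarith [sq_nonneg u]
  have hQe : Q = C c * (X ^ 3 * N - C (a + u) * (X ^ 2 * N) + C (v + a * u) * (X * N) -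
      C (a * v) * N) := by
    rw [← hS, hSq]
    simp only [map_add, map_mul, map_neg]
    ring
  have hcoef : ∀ k, Q.coeff (k + 3) = c * (N.coeff k - (a + u) * N.coeff (k + 1) +
      (v + a * u) * N.coeff (k + 2) - a * v * N.coeff (k + 3)) := by
    intro k
    rw [hQe]
    simp only [coeff_C_mul, coeff_sub, coeff_add, coeff_X_pow_mul, coeff_X_mul,
      show k + 3 = (k + 1) + 2 from rfl]
  have hcoef1 : Q.coeff 1 = c * ((v + a * u) * N.coeff 0 - a * v * N.coeff 1) := by
    rw [hQe]
    simp only [coeff_C_mul, coeff_sub, coeff_add, coeff_X_pow_mul',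
      show (X * N).coeff 1 = N.coeff 0 from coeff_X_mul N 0]
    norm_num
  have c11 := hcoef 8
  have c10 := hcoef 7
  have c7 := hcoef 4
  have c4 := hcoef 1
  simp only [hpc, Nat.reduceAdd] at c11 c10 c7 c4 hcoef1
  norm_num [Nat.choose] at c11 c10 c7 c4 hcoef1
  have hcpos : 0 < c := by
    rw [c11] at h11
    exact pos_of_mul_pos_left h11 (hpp 8 le_rfl).le
  rw [c10] at h10
  rw [c7] at h7
  rw [c4] at h4
  rw [hcoef1] at h1
  have h10' := neg_of_mul_neg_right h10 hcpos.le
  have h7' := neg_of_mul_neg_right h7 hcpos.le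
  have h4' := (mul_pos_iff_of_pos_left hcpos).1 h4
  have h1' := (mul_pos_iff_of_pos_left hcpos).1 h1
  -- The `k`-th elementary symmetric function is the coefficient of degree `8 - k`.
  refine no_realization (fun k => p (8 - k)) (fun k _ => hpp _ (by omega)) ?_ hapos hvpos hdisc
    ?_ ?_ ?_ ?_
  · intro k hk
    have := hplc (8 - (k + 2)) (by omega)
    rw [show 8 - (k + 2) + 2 = 8 - k by omega, show 8 - (k + 2) + 1 = 8 - (k + 1) by omega] at this
    linarith
  all_goals simp only [Nat.reduceSub]; linarith

/-! ### The classification in degree 11 -/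

/-- A polynomial with one of the two forbidden sign patterns has the coefficient signs required by
`not_rootData`. -/
lemma not_realizable_of_signs {σ : List ℝ} (hσ : σ.length = 12) (h0 : σ[0] = 1) (h1 : σ[1] = -1)
    (h4 : σ[4] = -1) (h7 : σ[7] = 1) (h10 : σ[10] = 1) (h11 : σ[11] = -1) :
    ¬ Realizable σ 1 8 := by
  rintro ⟨Q, ⟨hd, hs⟩, hr⟩
  have hd' : Q.natDegree = 11 := by omega
  have key : ∀ i (hi : i < σ.length), 0 < σ[i] * Q.coeff (11 - i) := fun i hi => by
    simpa [hd'] using hs ⟨i, hi⟩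
  have k0 := key 0 (by omega)
  have k1 := key 1 (by omega)
  have k4 := key 4 (by omega)
  have k7 := key 7 (by omega)
  have k10 := key 10 (by omega)
  have k11 := key 11 (by omega)
  rw [h0] at k0
  rw [h1] at k1
  rw [h4] at k4
  rw [h7] at k7
  rw [h10] at k10
  rw [h11] at k11
  simp only [Nat.reduceSub] at k0 k1 k4 k7 k10 k11
  exact not_rootData hd' (by linarith) (by linarith) (by linarith) (by linarith) (by linarith)
    (by linarith) hr

theorem stmt3 :
    ¬ Realizable (sigmaPat [1, 5, 5, 1]) 1 8 ∧
    ¬ Realizable (sigmaPat [1, 4, 6, 1]) 1 8 ∧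
    ∀ (σ : List ℝ) (pos neg : ℕ),
      IsSignPatternList σ → σ.length = 12 → Admissible σ pos neg →
      min pos neg = 1 →
      (∀ C ∈ [((sigmaPat [1, 5, 5, 1], 1, 8) : Couple),
              (sigmaPat [1, 4, 6, 1], 1, 8),
              (sigmaPat [1, 4, 5, 2], 1, 8),
              (sigmaPat [1, 5, 4, 2], 1, 8),
              (sigmaPat [2, 4, 4, 2], 1, 8),
              (sigmaPat [1, 4, 4, 1, 1, 1], 1, 6),
              (sigmaPat [1, 4, 1, 1, 4, 1], 1, 6),
              (sigmaPat [1, 3, 1, 1, 1, 1, 3, 1], 1, 4)],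
        ¬ SameOrbit C (σ, pos, neg)) →
      Realizable σ pos neg := by
  refine ⟨?_, ?_, ?_⟩
  · apply not_realizable_of_signs <;> simp [sigmaPat, altBlocks, List.replicate]
  · apply not_realizable_of_signs <;> simp [sigmaPat, altBlocks, List.replicate]
  intro σ pos neg hσ hlen hadm hmin hexc
  obtain ⟨hhead, hent⟩ := hσ
  obtain ⟨l, rfl⟩ : ∃ l, σ = 1 :: l := by
    cases σ with
    | nil => simp at hhead
    | cons s l => simp only [List.head?_cons, Option.some.injEq] at hhead; exact ⟨l, by rw [hhead]⟩
  obtain ⟨w, hw⟩ := exists_wordPat 1 l hent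
  rw [hw] at hlen hadm hexc ⊢
  have hwl : w.length = 11 := by
    rw [wordPat_length] at hlen
    omega
  obtain ⟨a1, a2, a3, a4⟩ := hadm
  rw [signChanges_wordPat 1 one_ne_zero] at a1 a2 a3 a4
  rw [hlen] at a2 a4
  simp only [Nat.add_one_sub_one] at a2 a4
  simp only [List.forall_mem_cons, List.not_mem_nil, false_imp_iff, implies_true, and_true,
    SameOrbit, not_or] at hexc
  obtain ⟨o1, o2, o3, o4, o5, o6, o7, o8⟩ := hexc
  rcases (by omega : pos = 1 ∨ neg = 1) with rfl | rfl
  · rcases wordRealizable_or_excluded hwl (n := neg) (by omega) a1 a2 a3 a4 with h | h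
    · exact h.realizable
    · exfalso
      simp only [excluded, List.mem_cons, Prod.mk.injEq, List.not_mem_nil, or_false] at h
      rcases h with ⟨rfl, rfl⟩ | ⟨rfl, rfl⟩ | ⟨rfl, rfl⟩ | ⟨rfl, rfl⟩ | ⟨rfl, rfl⟩ | ⟨rfl, rfl⟩ |
        ⟨rfl, rfl⟩ | ⟨rfl, rfl⟩ | ⟨rfl, rfl⟩ | ⟨rfl, rfl⟩ | ⟨rfl, rfl⟩ | ⟨rfl, rfl⟩
      · exact o1.1 (by simp [sigmaPat, altBlocks, wordPat, List.replicate])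
      · exact o2.1 (by simp [sigmaPat, altBlocks, wordPat, List.replicate])
      · exact o2.2.2.1 (by simp [sigmaPat, altBlocks, irC, irPat, wordPat, List.replicate])
      · exact o3.1 (by simp [sigmaPat, altBlocks, wordPat, List.replicate])
      · exact o3.2.2.1 (by simp [sigmaPat, altBlocks, irC, irPat, wordPat, List.replicate])
      · exact o4.1 (by simp [sigmaPat, altBlocks, wordPat, List.replicate])
      · exact o4.2.2.1 (by simp [sigmaPat, altBlocks, irC, irPat, wordPat, List.replicate])
      · exact o5.1 (by simp [sigmaPat, altBlocks, wordPat, List.replicate])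
      · exact o6.1 (by simp [sigmaPat, altBlocks, wordPat, List.replicate])
      · exact o6.2.2.1 (by simp [sigmaPat, altBlocks, irC, irPat, wordPat, List.replicate])
      · exact o7.1 (by simp [sigmaPat, altBlocks, wordPat, List.replicate])
      · exact o8.1 (by simp [sigmaPat, altBlocks, wordPat, List.replicate])
  · -- One negative root: pass to `x ↦ -x`, which exchanges changes and preservations.
    obtain ⟨w', rfl⟩ : ∃ w' : List Bool, w = w'.map not :=
      ⟨w.map not, by simp [Function.comp_def]⟩
    have hcount : (w'.map not).count true + w'.count true = w'.length := by
      clear * -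
      induction w' with
      | nil => rfl
      | cons b w ih => cases b <;> simp <;> omega
    rw [List.length_map] at hwl
    rw [hwl] at hcount
    obtain ⟨x, hx⟩ := a3
    obtain ⟨y, hy⟩ := a4
    rcases wordRealizable_or_excluded hwl (n := pos) (by omega) (by omega) (by omega)
      ⟨y, by omega⟩ ⟨x, by omega⟩ with h | h
    · exact h.neg.realizable
    · exfalso
      simp only [excluded, List.mem_cons, Prod.mk.injEq, List.not_mem_nil, or_false] at h
      rcases h with ⟨rfl, rfl⟩ | ⟨rfl, rfl⟩ | ⟨rfl, rfl⟩ | ⟨rfl, rfl⟩ | ⟨rfl, rfl⟩ | ⟨rfl, rfl⟩ |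
        ⟨rfl, rfl⟩ | ⟨rfl, rfl⟩ | ⟨rfl, rfl⟩ | ⟨rfl, rfl⟩ | ⟨rfl, rfl⟩ | ⟨rfl, rfl⟩
      · exact o1.2.1 (by simp [sigmaPat, altBlocks, imC, imPat, wordPat, List.replicate, pow_succ])
      · exact o2.2.1 (by simp [sigmaPat, altBlocks, imC, imPat, wordPat, List.replicate, pow_succ])
      · exact o2.2.2.2
          (by simp [sigmaPat, altBlocks, imC, imPat, irC, irPat, wordPat, List.replicate, pow_succ])
      · exact o3.2.1 (by simp [sigmaPat, altBlocks, imC, imPat, wordPat, List.replicate, pow_succ])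
      · exact o3.2.2.2
          (by simp [sigmaPat, altBlocks, imC, imPat, irC, irPat, wordPat, List.replicate, pow_succ])
      · exact o4.2.1 (by simp [sigmaPat, altBlocks, imC, imPat, wordPat, List.replicate, pow_succ])
      · exact o4.2.2.2
          (by simp [sigmaPat, altBlocks, imC, imPat, irC, irPat, wordPat, List.replicate, pow_succ])
      · exact o5.2.1 (by simp [sigmaPat, altBlocks, imC, imPat, wordPat, List.replicate, pow_succ])
      · exact o6.2.1 (by simp [sigmaPat, altBlocks, imC, imPat, wordPat, List.replicate, pow_succ])
      · exact o6.2.2.2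
          (by simp [sigmaPat, altBlocks, imC, imPat, irC, irPat, wordPat, List.replicate, pow_succ])
      · exact o7.2.1 (by simp [sigmaPat, altBlocks, imC, imPat, wordPat, List.replicate, pow_succ])
      · exact o8.2.1 (by simp [sigmaPat, altBlocks, imC, imPat, wordPat, List.replicate, pow_succ])
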